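/- arXiv:math/0409264 — 9 statements merged into one kernel-verified Lean document; each statement's English description precedes it below -/
import Mathlib

section
/- Let P be an n×n row-stochastic real matrix and let σ be a state symmetry of P. Then P satisfies the (Dynkin) strong-lumpability condition with respect to the partition of the index set into orbits of the cyclic group generated by σ: for any two indices i and i' lying in the same ⟨σ⟩-orbit and any ⟨σ⟩-orbit O, the row sums agree: ∑_{j ∈ O} P i j = ∑_{j ∈ O} P i' j. -/
open scoped Classical

/-- A row-stochastic matrix with a state symmetry `σ` satisfies the
strong-lumpability condition with respect to the partition into `⟨σ⟩`-orbits: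
row sums over any orbit agree for indices lying in the same orbit. -/
theorem strong_lumpability_of_state_symmetry
    (n : ℕ) (P : Matrix (Fin n) (Fin n) ℝ) (σ : Equiv.Perm (Fin n))
    (hnonneg : ∀ i j, 0 ≤ P i j) (hrow : ∀ i, ∑ j, P i j = 1)
    (hsym : ∀ i j, P (σ i) (σ j) = P i j) :
    ∀ i i' : Fin n, (∃ k : ℕ, (σ ^ k) i = i') →
      ∀ m : Fin n,
        ∑ j ∈ Finset.univ.filter (fun j => ∃ k : ℕ, (σ ^ k) m = j), P i j =
        ∑ j ∈ Finset.univ.filter (fun j => ∃ k : ℕ, (σ ^ k) m = j), P i' j := by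
  have step : ∀ i m : Fin n,
      ∑ j ∈ Finset.univ.filter (fun j => ∃ k : ℕ, (σ ^ k) m = j), P i j =
      ∑ j ∈ Finset.univ.filter (fun j => ∃ k : ℕ, (σ ^ k) m = j), P (σ i) j := by
    intro i m
    refine Finset.sum_equiv σ ?_ (fun j _ => (hsym i j).symm)
    intro j
    simp only [Finset.mem_filter, Finset.mem_univ, true_and]
    constructor
    · rintro ⟨k, hk⟩
      exact ⟨k + 1, by rw [pow_succ', Equiv.Perm.mul_apply, hk]⟩
    · rintro ⟨k, hk⟩
      refine ⟨(orderOf σ - 1) + k, ?_⟩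
      rw [pow_add, Equiv.Perm.mul_apply, hk, ← Equiv.Perm.mul_apply, ← pow_succ,
        Nat.sub_add_cancel (orderOf_pos σ), pow_orderOf_eq_one, Equiv.Perm.one_apply]
  rintro i i' ⟨k, rfl⟩ m
  induction k with
  | zero => simp
  | succ k ih =>
    rw [ih, step, pow_succ', Equiv.Perm.mul_apply]
end

section
/- Let P be an n×n row-stochastic real matrix with a state symmetry σ. Then there exists a row-stochastic matrix Q, indexed by the ⟨σ⟩-orbits of the index set, such that for every index i and every ⟨σ⟩-orbit O one has ∑_{j ∈ O} P i j = Q (orbit of i) O; consequently the aggregated (lumped) transition probabilities are well defined on the orbit partition. -/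
open scoped Classical

/-- A row-stochastic matrix `P` with a state symmetry `σ` admits a
row-stochastic lumped matrix `Q`, indexed by the `⟨σ⟩`-orbits of the index set, such that
for every index `i` and every orbit, the row sum of `P` over the orbit equals the
corresponding entry of `Q`; in particular the lumped transition probabilities are well
defined on the orbit partition. -/
theorem exists_lumped_matrix_of_state_symmetry
    (n : ℕ) (P : Matrix (Fin n) (Fin n) ℝ) (σ : Equiv.Perm (Fin n))
    (hnonneg : ∀ i j, 0 ≤ P i j) (hrow : ∀ i, ∑ j, P i j = 1)
    (hsym : ∀ i j, P (σ i) (σ j) = P i j) :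
    ∃ Q : Matrix (Quotient (MulAction.orbitRel (↥(Subgroup.zpowers σ)) (Fin n)))
                 (Quotient (MulAction.orbitRel (↥(Subgroup.zpowers σ)) (Fin n))) ℝ,
      (∀ a b, 0 ≤ Q a b) ∧
      (∀ a, ∑ b, Q a b = 1) ∧
      (∀ i m : Fin n,
        ∑ j ∈ Finset.univ.filter (fun j => ∃ k : ℕ, (σ ^ k) m = j), P i j =
          Q (Quotient.mk (MulAction.orbitRel (↥(Subgroup.zpowers σ)) (Fin n)) i)
            (Quotient.mk (MulAction.orbitRel (↥(Subgroup.zpowers σ)) (Fin n)) m)) := by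
  have key : ∀ j m : Fin n,
      (Quotient.mk (MulAction.orbitRel (↥(Subgroup.zpowers σ)) (Fin n)) j =
        Quotient.mk (MulAction.orbitRel (↥(Subgroup.zpowers σ)) (Fin n)) m) ↔
      ∃ k : ℕ, (σ ^ k) m = j := by
    intro j m
    rw [Quotient.eq, MulAction.orbitRel_apply]
    constructor
    · rintro ⟨⟨g, hg⟩, rfl⟩
      rw [← mem_powers_iff_mem_zpowers] at hg
      obtain ⟨k, rfl⟩ := hg
      exact ⟨k, rfl⟩
    · rintro ⟨k, rfl⟩
      exact ⟨⟨σ ^ k, Subgroup.npow_mem_zpowers σ k⟩, rfl⟩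
  have hpow : ∀ (k : ℕ) (i j : Fin n), P ((σ ^ k) i) ((σ ^ k) j) = P i j := by
    intro k
    induction k with
    | zero => intro i j; simp
    | succ k ih =>
      intro i j
      rw [pow_succ, Equiv.Perm.mul_apply, Equiv.Perm.mul_apply, ih, hsym]
  have hinv : ∀ (k : ℕ) (i : Fin n)
      (b : Quotient (MulAction.orbitRel (↥(Subgroup.zpowers σ)) (Fin n))),
      ∑ j ∈ Finset.univ.filter (fun j => Quotient.mk _ j = b), P ((σ ^ k) i) j =
      ∑ j ∈ Finset.univ.filter (fun j => Quotient.mk _ j = b), P i j := by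
    intro k i b
    rw [Finset.sum_filter, Finset.sum_filter, ← Equiv.sum_comp (σ ^ k)]
    refine Finset.sum_congr rfl fun j _ => ?_
    rw [(key ((σ ^ k) j) j).2 ⟨k, rfl⟩, hpow]
  refine ⟨fun a b => ∑ j ∈ Finset.univ.filter (fun j => Quotient.mk _ j = b), P a.out j,
    fun a b => Finset.sum_nonneg fun j _ => hnonneg _ _, fun a => ?_, fun i m => ?_⟩
  · rw [← hrow a.out]
    exact Finset.sum_fiberwise _ _ _
  · obtain ⟨k, hk⟩ := (key _ i).1
      (Quotient.out_eq (Quotient.mk (MulAction.orbitRel (↥(Subgroup.zpowers σ)) (Fin n)) i))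
    simp only [← hk, hinv]
    refine Finset.sum_congr ?_ fun _ _ => rfl
    ext j
    simp only [Finset.mem_filter, key]
end

section
/- Let P be an n×n row-stochastic real matrix with a state symmetry σ, let v be a probability vector (nonnegative entries summing to 1) on the same index set, and let Q be the lumped matrix on ⟨σ⟩-orbits defined by Q (orbit of i) O = ∑_{j ∈ O} P i j (which is well defined). Then the aggregated process of the Markov chain with transition matrix P and start vector v is governed by Q: for every n ∈ ℕ and every ⟨σ⟩-orbit O, ∑_{j ∈ O} (vᵀ Pⁿ) j = (wᵀ Qⁿ) O, where w is the vector on orbits given by w O = ∑_{j ∈ O} v j. -/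
open scoped Classical
open Matrix

/-- Let `P` be row stochastic with state symmetry `σ`, let `v` be a
probability start vector, let `Q` be the (well-defined) lumped matrix on `⟨σ⟩`-orbits with
`Q ⟦i⟧ ⟦m⟧ = ∑_{j ∈ orbit m} P i j`, and let `w` be the lumped start vector with
`w ⟦m⟧ = ∑_{j ∈ orbit m} v j`. Then the aggregated process is governed by `Q`: for every
time `N` and every orbit, `∑_{j ∈ orbit m} (vᵀ Pᴺ) j = (wᵀ Qᴺ) ⟦m⟧`. -/
theorem lumped_chain_governed_by_lumped_matrix
    (n : ℕ) (P : Matrix (Fin n) (Fin n) ℝ) (σ : Equiv.Perm (Fin n)) (v : Fin n → ℝ)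
    (hnonneg : ∀ i j, 0 ≤ P i j) (hrow : ∀ i, ∑ j, P i j = 1)
    (hsym : ∀ i j, P (σ i) (σ j) = P i j)
    (hv0 : ∀ i, 0 ≤ v i) (hv1 : ∑ i, v i = 1)
    (Q : Matrix (Quotient (MulAction.orbitRel (↥(Subgroup.zpowers σ)) (Fin n)))
                (Quotient (MulAction.orbitRel (↥(Subgroup.zpowers σ)) (Fin n))) ℝ)
    (hQ : ∀ i m : Fin n,
      ∑ j ∈ Finset.univ.filter (fun j => ∃ k : ℕ, (σ ^ k) m = j), P i j =
        Q (Quotient.mk (MulAction.orbitRel (↥(Subgroup.zpowers σ)) (Fin n)) i)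
          (Quotient.mk (MulAction.orbitRel (↥(Subgroup.zpowers σ)) (Fin n)) m))
    (w : Quotient (MulAction.orbitRel (↥(Subgroup.zpowers σ)) (Fin n)) → ℝ)
    (hw : ∀ m : Fin n,
      w (Quotient.mk (MulAction.orbitRel (↥(Subgroup.zpowers σ)) (Fin n)) m) =
        ∑ j ∈ Finset.univ.filter (fun j => ∃ k : ℕ, (σ ^ k) m = j), v j) :
    ∀ (N : ℕ) (m : Fin n),
      ∑ j ∈ Finset.univ.filter (fun j => ∃ k : ℕ, (σ ^ k) m = j), (v ᵥ* (P ^ N)) j =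
        (w ᵥ* (Q ^ N)) (Quotient.mk (MulAction.orbitRel (↥(Subgroup.zpowers σ)) (Fin n)) m) := by
  have key : ∀ m j : Fin n, (∃ k : ℕ, (σ ^ k) m = j) ↔
      Quotient.mk (MulAction.orbitRel (↥(Subgroup.zpowers σ)) (Fin n)) j =
        Quotient.mk (MulAction.orbitRel (↥(Subgroup.zpowers σ)) (Fin n)) m := by
    intro m j
    rw [Quotient.eq, MulAction.orbitRel_apply]
    constructor
    · rintro ⟨k, rfl⟩
      exact ⟨⟨σ ^ k, ⟨(k : ℤ), by simp⟩⟩, rfl⟩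
    · rintro ⟨⟨g, hg⟩, rfl⟩
      obtain ⟨k, rfl⟩ := (mem_powers_iff_mem_zpowers (x := σ)).2 hg
      exact ⟨k, rfl⟩
  simp only [key] at hQ hw ⊢
  intro N
  induction N with
  | zero => intro m; simp [hw]
  | succ N ih =>
    intro m
    rw [pow_succ, pow_succ, ← Matrix.vecMul_vecMul, ← Matrix.vecMul_vecMul]
    generalize v ᵥ* P ^ N = u at ih ⊢
    generalize w ᵥ* Q ^ N = x at ih ⊢
    simp only [Matrix.vecMul, dotProduct]
    rw [Finset.sum_comm]
    simp only [← Finset.mul_sum, hQ]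
    rw [← Finset.sum_fiberwise Finset.univ
      (fun i => Quotient.mk (MulAction.orbitRel (↥(Subgroup.zpowers σ)) (Fin n)) i)]
    refine Finset.sum_congr rfl fun O _ => ?_
    obtain ⟨o, rfl⟩ := Quotient.exists_rep O
    rw [← ih o, Finset.sum_mul]
    refine Finset.sum_congr rfl fun i hi => ?_
    rw [(Finset.mem_filter.1 hi).2]
end

section
/- Let P be an n×n row-stochastic real matrix with a state symmetry σ. Then P satisfies the exact-lumpability condition with respect to the partition into ⟨σ⟩-orbits: for any two indices i and i' lying in the same ⟨σ⟩-orbit and any ⟨σ⟩-orbit O, the column sums agree: ∑_{j ∈ O} P j i = ∑_{j ∈ O} P j i'. -/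
open scoped Classical

/-- A row-stochastic matrix with a state symmetry `σ` satisfies the
exact-lumpability condition with respect to the partition into `⟨σ⟩`-orbits:
column sums over any orbit agree for indices lying in the same orbit. -/
theorem exact_lumpability_condition_of_state_symmetry
    (n : ℕ) (P : Matrix (Fin n) (Fin n) ℝ) (σ : Equiv.Perm (Fin n))
    (hnonneg : ∀ i j, 0 ≤ P i j) (hrow : ∀ i, ∑ j, P i j = 1)
    (hsym : ∀ i j, P (σ i) (σ j) = P i j) :
    ∀ i i' : Fin n, (∃ k : ℕ, (σ ^ k) i = i') →
      ∀ m : Fin n,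
        ∑ j ∈ Finset.univ.filter (fun j => ∃ k : ℕ, (σ ^ k) m = j), P j i =
        ∑ j ∈ Finset.univ.filter (fun j => ∃ k : ℕ, (σ ^ k) m = j), P j i' := by
  have step : ∀ m i : Fin n,
      ∑ j ∈ Finset.univ.filter (fun j => ∃ k : ℕ, (σ ^ k) m = j), P j i =
      ∑ j ∈ Finset.univ.filter (fun j => ∃ k : ℕ, (σ ^ k) m = j), P j (σ i) := by
    intro m i
    refine Finset.sum_equiv σ ?_ (fun j _ => (hsym j i).symm)
    intro j
    simp only [Finset.mem_filter, Finset.mem_univ, true_and]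
    constructor
    · rintro ⟨k, rfl⟩
      exact ⟨k + 1, by rw [pow_succ']; rfl⟩
    · rintro ⟨k, hk⟩
      refine ⟨orderOf σ - 1 + k, σ.injective ?_⟩
      have hpos : 0 < orderOf σ := orderOf_pos σ
      rw [← hk, ← Equiv.Perm.mul_apply, ← pow_succ',
        show orderOf σ - 1 + k + 1 = orderOf σ + k by omega, pow_add,
        pow_orderOf_eq_one, one_mul]
  rintro i i' ⟨k, rfl⟩ m
  induction k with
  | zero => rfl
  | succ k ih =>
    rw [ih, step m, pow_succ', Equiv.Perm.mul_apply]
end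

section
/- Let P be an n×n row-stochastic real matrix and v a probability vector (nonnegative entries summing to 1) on the same index set, and suppose σ is a common state symmetry of P and v. Then the Markov chain X = (P, v) is exactly lumpable with respect to the partition into ⟨σ⟩-orbits: for every time n ∈ ℕ and every index i, the probability of being in state i at time n equals the aggregated probability of the orbit of i divided by the orbit size, i.e. (vᵀ Pⁿ) i = (∑_{j ∈ orbit(i)} (vᵀ Pⁿ) j) / |orbit(i)|. -/
open scoped Classical
open Matrix

/-- If `σ` is a common state symmetry of the row-stochastic matrix `P` and of
the probability vector `v`, then the Markov chain `(P, v)` is exactly lumpable with respect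
to the partition into `⟨σ⟩`-orbits: at any time `N`, the probability of any state `i` equals
the aggregated probability of its orbit divided by the orbit size. -/
theorem exactly_lumpable_of_common_state_symmetry
    (n : ℕ) (P : Matrix (Fin n) (Fin n) ℝ) (v : Fin n → ℝ) (σ : Equiv.Perm (Fin n))
    (hnonneg : ∀ i j, 0 ≤ P i j) (hrow : ∀ i, ∑ j, P i j = 1)
    (hv0 : ∀ i, 0 ≤ v i) (hv1 : ∑ i, v i = 1)
    (hPsym : ∀ i j, P (σ i) (σ j) = P i j)
    (hvsym : ∀ i, v (σ i) = v i) :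
    ∀ (N : ℕ) (i : Fin n),
      (v ᵥ* (P ^ N)) i =
        (∑ j ∈ Finset.univ.filter (fun j => ∃ k : ℕ, (σ ^ k) i = j), (v ᵥ* (P ^ N)) j) /
          ((Finset.univ.filter (fun j => ∃ k : ℕ, (σ ^ k) i = j)).card : ℝ) := by
  intro N i
  have h1 : ∀ N : ℕ, ∀ j, (v ᵥ* (P ^ N)) (σ j) = (v ᵥ* (P ^ N)) j := by
    intro N
    induction N with
    | zero => intro j; simpa using hvsym j
    | succ N ih =>
      intro j
      rw [pow_succ, ← Matrix.vecMul_vecMul]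
      generalize v ᵥ* (P ^ N) = w at ih
      simp only [Matrix.vecMul, dotProduct]
      rw [← Equiv.sum_comp σ]
      exact Finset.sum_congr rfl fun x _ => by rw [ih, hPsym]
  have h2 : ∀ k : ℕ, (v ᵥ* (P ^ N)) ((σ ^ k) i) = (v ᵥ* (P ^ N)) i := by
    intro k
    induction k with
    | zero => simp
    | succ k ih => rw [pow_succ', Equiv.Perm.mul_apply, h1, ih]
  have hs : ∑ j ∈ Finset.univ.filter (fun j => ∃ k : ℕ, (σ ^ k) i = j), (v ᵥ* (P ^ N)) j
      = ∑ j ∈ Finset.univ.filter (fun j => ∃ k : ℕ, (σ ^ k) i = j), (v ᵥ* (P ^ N)) i := by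
    refine Finset.sum_congr rfl fun j hj => ?_
    obtain ⟨k, rfl⟩ := (Finset.mem_filter.1 hj).2
    exact h2 k
  have hc : ((Finset.univ.filter (fun j => ∃ k : ℕ, (σ ^ k) i = j)).card : ℝ) ≠ 0 := by
    have : i ∈ Finset.univ.filter (fun j => ∃ k : ℕ, (σ ^ k) i = j) :=
      Finset.mem_filter.2 ⟨Finset.mem_univ _, 0, by simp⟩
    exact_mod_cast (Finset.card_pos.2 ⟨i, this⟩).ne'
  rw [hs, Finset.sum_const, nsmul_eq_mul, mul_div_cancel_left₀ _ hc]
end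

section
/- For every set P of permutations of the finite index set {0,…,n−1}, there exists a single permutation ρ̂ of {0,…,n−1} such that the vectors in ℝⁿ admitting every element of P as a state symmetry are exactly the vectors admitting ρ̂ as a state symmetry: {v ∈ ℝⁿ | ∀ ρ ∈ P, ∀ i, v (ρ i) = v i} = {v ∈ ℝⁿ | ∀ i, v (ρ̂ i) = v i}. -/
/-- For any set `P` of permutations of `{0,…,n−1}` there is a single
permutation `ρ̂` such that a vector admits every element of `P` as a state symmetry
iff it admits `ρ̂` as a state symmetry. -/
theorem exists_single_perm_with_same_vector_state_symmetries
    (n : ℕ) (P : Set (Equiv.Perm (Fin n))) :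
    ∃ ρ : Equiv.Perm (Fin n),
      {v : Fin n → ℝ | ∀ σ ∈ P, ∀ i, v (σ i) = v i} =
      {v : Fin n → ℝ | ∀ i, v (ρ i) = v i} := by
  classical
  let S : Set (Fin n → ℝ) := {v : Fin n → ℝ | ∀ σ ∈ P, ∀ i, v (σ i) = v i}
  let q : Fin n → (S → ℝ) := fun i v => v.1 i
  have hex : ∀ c : S → ℝ, ∃ f : Equiv.Perm (Fin n), f.IsCycleOn {j | q j = c} := by
    intro c
    obtain ⟨f, hf, -⟩ := (Set.to_countable {j | q j = c}).exists_cycleOn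
    exact ⟨f, hf⟩
  choose f hf using hex
  have hq : ∀ i, q (f (q i) i) = q i := fun i => (hf (q i)).apply_mem_iff.2 rfl
  have hinj : Function.Injective (fun i => f (q i) i) := by
    intro i j h
    have h' : f (q i) i = f (q j) j := h
    have e : q i = q j := by rw [← hq i, ← hq j, h']
    rw [e] at h'
    exact (f (q j)).injective h'
  let ρ : Equiv.Perm (Fin n) := Equiv.ofBijective _ (Finite.injective_iff_bijective.1 hinj)
  have hρ : ∀ i, ρ i = f (q i) i := fun i => rfl
  refine ⟨ρ, ?_⟩
  ext v
  constructor
  · intro hv i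
    exact congrFun (hq i) ⟨v, hv⟩
  · intro hv σ hσ i
    have hs : q (σ i) = q i := by
      funext w
      exact w.2 σ hσ i
    obtain ⟨k, hk⟩ := (hf (q i)).exists_pow_eq' (Set.toFinite _) (a := i) (b := σ i) rfl hs
    have key : ∀ m : ℕ, q ((f (q i) ^ m) i) = q i ∧ v ((f (q i) ^ m) i) = v i := by
      intro m
      induction m with
      | zero => simp
      | succ m ih =>
        obtain ⟨h1, h2⟩ := ih
        rw [pow_succ', Equiv.Perm.mul_apply]
        have e := hρ ((f (q i) ^ m) i)
        rw [h1] at e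
        refine ⟨(hf (q i)).apply_mem_iff.2 h1, ?_⟩
        rw [← e, hv, h2]
    have := (key k).2
    grind
end

section
/- Let P = {σ₁, σ₂} where σ₁ = (0 1)(2 3) and σ₂ = (0 2)(1 3) are double transpositions of {0,1,2,3}. If ρ̂ is any permutation of {0,1,2,3} such that the vectors in ℝ⁴ having ρ̂ as a state symmetry are exactly the vectors having both σ₁ and σ₂ as state symmetries, then ρ̂ does not belong to the subgroup of the symmetric group generated by {σ₁, σ₂} (the Klein four-group). -/
/-- If `ρ̂` is a permutation of `{0,1,2,3}` whose vector state-symmetry space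
is exactly the space of vectors having both `(0 1)(2 3)` and `(0 2)(1 3)` as state
symmetries, then `ρ̂` is not an element of the Klein four-group generated by these two
double transpositions. -/
theorem perm_with_klein_symmetry_space_not_in_klein_group
    (ρ : Equiv.Perm (Fin 4))
    (h : {v : Fin 4 → ℝ | ∀ i, v (ρ i) = v i} =
         {v : Fin 4 → ℝ |
           (∀ i, v ((Equiv.swap (0 : Fin 4) 1 * Equiv.swap 2 3 : Equiv.Perm (Fin 4)) i) = v i) ∧
           (∀ i, v ((Equiv.swap (0 : Fin 4) 2 * Equiv.swap 1 3 : Equiv.Perm (Fin 4)) i) = v i)}) :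
    ρ ∉ Subgroup.closure
        ({Equiv.swap (0 : Fin 4) 1 * Equiv.swap 2 3,
          Equiv.swap (0 : Fin 4) 2 * Equiv.swap 1 3} : Set (Equiv.Perm (Fin 4))) := by
  intro hmem
  have key : ρ = 1 ∨ ρ = Equiv.swap (0 : Fin 4) 1 * Equiv.swap 2 3 ∨
      ρ = Equiv.swap (0 : Fin 4) 2 * Equiv.swap 1 3 ∨
      ρ = Equiv.swap (0 : Fin 4) 3 * Equiv.swap 1 2 := by
    clear h
    induction hmem using Subgroup.closure_induction with
    | mem x hx =>
      rcases hx with hx | hx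
      · exact Or.inr (Or.inl hx)
      · exact Or.inr (Or.inr (Or.inl hx))
    | one => exact Or.inl rfl
    | mul x y _ _ hx hy =>
      rcases hx with rfl | rfl | rfl | rfl <;> rcases hy with rfl | rfl | rfl | rfl <;> decide
    | inv x _ hx =>
      rcases hx with rfl | rfl | rfl | rfl <;> decide
  have hinv : ∀ i, ρ (ρ i) = i := by
    rcases key with rfl | rfl | rfl | rfl <;> decide
  have hv : (fun i : Fin 4 => if i = 0 ∨ i = ρ 0 then (1 : ℝ) else 0) ∈
      {v : Fin 4 → ℝ | ∀ i, v (ρ i) = v i} := by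
    intro i
    have e : (ρ i = 0 ∨ ρ i = ρ 0) ↔ (i = 0 ∨ i = ρ 0) := by
      constructor
      · rintro (h1 | h1)
        · right; rw [← h1, hinv]
        · left; exact ρ.injective h1
      · rintro (h1 | h1)
        · right; rw [h1]
        · left; rw [h1, hinv]
    simp only [e]
  rw [h] at hv
  obtain ⟨h1, h2⟩ := hv
  have a1 := h1 0
  have a2 := h2 0
  have e1 : (Equiv.swap (0 : Fin 4) 1 * Equiv.swap 2 3 : Equiv.Perm (Fin 4)) 0 = 1 := by decide
  have e2 : (Equiv.swap (0 : Fin 4) 2 * Equiv.swap 1 3 : Equiv.Perm (Fin 4)) 0 = 2 := by decide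
  rw [e1] at a1
  rw [e2] at a2
  have b1 : (1 : Fin 4) = ρ 0 := by
    by_contra hne
    simp [hne] at a1
  have b2 : (2 : Fin 4) = ρ 0 := by
    by_contra hne
    simp [hne] at a2
  exact absurd (b1.trans b2.symm) (by decide)
end

section
/- Let M be a 4×4 real matrix having every even permutation of {0,1,2,3} as a state symmetry. Then M has constant diagonal and constant off-diagonal entries (M i i = M j j for all i, j, and M i j = M k l whenever i ≠ j and k ≠ l), and consequently every permutation of {0,1,2,3} is a state symmetry of M. In particular, the alternating group A₄ is not the full group of state symmetries of any 4×4 real matrix (A₄ is not a group of pure matrix state symmetries). -/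
set_option maxRecDepth 100000 in
theorem aux_two_transitive : ∀ i j : Fin 4, i ≠ j →
    ∃ σ : Equiv.Perm (Fin 4), Equiv.Perm.sign σ = 1 ∧ σ 0 = i ∧ σ 1 = j := by
  decide

theorem aux_main (M : Matrix (Fin 4) (Fin 4) ℝ)
    (h : ∀ σ ∈ alternatingGroup (Fin 4), ∀ i j, M (σ i) (σ j) = M i j) :
    (∀ i j, M i i = M j j) ∧
    (∀ i j k l, i ≠ j → k ≠ l → M i j = M k l) ∧
    (∀ (σ : Equiv.Perm (Fin 4)) (i j : Fin 4), M (σ i) (σ j) = M i j) := by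
  have hd : ∀ i, M i i = M 0 0 := by
    intro i
    obtain ⟨j, hj⟩ := exists_ne i
    obtain ⟨σ, hs, h0, -⟩ := aux_two_transitive i j hj.symm
    have := h σ (Equiv.Perm.mem_alternatingGroup.2 hs) 0 0
    rwa [h0] at this
  have ho : ∀ i j, i ≠ j → M i j = M 0 1 := by
    intro i j hj
    obtain ⟨σ, hs, h0, h1⟩ := aux_two_transitive i j hj
    have := h σ (Equiv.Perm.mem_alternatingGroup.2 hs) 0 1
    rwa [h0, h1] at this
  refine ⟨fun i j => (hd i).trans (hd j).symm,
    fun i j k l hij hkl => (ho i j hij).trans (ho k l hkl).symm, fun σ i j => ?_⟩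
  by_cases hij : i = j
  · subst hij
    exact (hd _).trans (hd _).symm
  · exact (ho _ _ (σ.injective.ne hij)).trans (ho _ _ hij).symm

/-- A 4×4 real matrix having every even permutation of `{0,1,2,3}` as a
state symmetry has constant diagonal and constant off-diagonal entries, hence every
permutation of `{0,1,2,3}` is one of its state symmetries; in particular the alternating
group `A₄` is not the full group of state symmetries of any 4×4 real matrix. -/
theorem alternatingGroup_four_not_pure_matrix_state_symmetries :
    (∀ M : Matrix (Fin 4) (Fin 4) ℝ,
      (∀ σ ∈ alternatingGroup (Fin 4), ∀ i j, M (σ i) (σ j) = M i j) →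
        (∀ i j, M i i = M j j) ∧
        (∀ i j k l, i ≠ j → k ≠ l → M i j = M k l) ∧
        (∀ (σ : Equiv.Perm (Fin 4)) (i j : Fin 4), M (σ i) (σ j) = M i j)) ∧
    ¬ ∃ M : Matrix (Fin 4) (Fin 4) ℝ,
        {σ : Equiv.Perm (Fin 4) | ∀ i j, M (σ i) (σ j) = M i j} =
          (alternatingGroup (Fin 4) : Set (Equiv.Perm (Fin 4))) := by
  refine ⟨aux_main, ?_⟩
  rintro ⟨M, hM⟩
  have hall := (aux_main M (fun σ hσ => by
    have h2 : σ ∈ {σ : Equiv.Perm (Fin 4) | ∀ i j, M (σ i) (σ j) = M i j} := by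
      rw [hM]; exact hσ
    exact h2)).2.2
  have h1 : Equiv.swap (0 : Fin 4) 1 ∈ (alternatingGroup (Fin 4) : Set (Equiv.Perm (Fin 4))) := by
    rw [← hM]; exact hall _
  have h3 := Equiv.Perm.mem_alternatingGroup.1 (SetLike.mem_coe.1 h1)
  rw [Equiv.Perm.sign_swap (by decide)] at h3
  exact absurd h3 (by decide)
end

section
/- Let (v⁽ⁱ⁾)_{i∈ℕ} be a sequence of vectors in ℝⁿ generated by an n×n real matrix M (i.e. v⁽ⁱ⁺¹⁾ = M v⁽ⁱ⁾ for all i), and suppose the sequence is periodic with period p ≥ 1 (i.e. v⁽ⁱ⁺ᵖ⁾ = v⁽ⁱ⁾ for all i). Then the sequence is generated by some n×n real matrix N satisfying Nᵖ = I: there exists N with Nᵖ equal to the identity matrix and v⁽ⁱ⁺¹⁾ = N v⁽ⁱ⁾ for all i. -/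
open Matrix

/-- A matrix-generated vector sequence which is periodic with period `p ≥ 1`
is generated by some matrix `N` with `N ^ p = I`. -/
theorem periodic_sequence_generated_by_matrix_of_finite_order
    (n : ℕ) (M : Matrix (Fin n) (Fin n) ℝ) (v : ℕ → Fin n → ℝ)
    (hgen : ∀ i : ℕ, v (i + 1) = M *ᵥ v i)
    (p : ℕ) (hp : 1 ≤ p) (hper : ∀ i : ℕ, v (i + p) = v i) :
    ∃ N : Matrix (Fin n) (Fin n) ℝ, N ^ p = 1 ∧ ∀ i : ℕ, v (i + 1) = N *ᵥ v i := by
  obtain ⟨Q, hQ⟩ := Submodule.exists_isCompl (Submodule.span ℝ (Set.range v))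
  obtain ⟨f, hfv, hfQ⟩ : ∃ f : (Fin n → ℝ) →ₗ[ℝ] (Fin n → ℝ),
      (∀ i, f (v i) = v (i + 1)) ∧ ∀ q ∈ Q, f q = q := by
    refine ⟨LinearMap.ofIsCompl hQ
      (M.mulVecLin ∘ₗ (Submodule.span ℝ (Set.range v)).subtype) Q.subtype, ?_, ?_⟩
    · intro i
      have h := LinearMap.ofIsCompl_apply_left hQ
        (φ := M.mulVecLin ∘ₗ (Submodule.span ℝ (Set.range v)).subtype) (ψ := Q.subtype)
        ⟨v i, Submodule.subset_span ⟨i, rfl⟩⟩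
      rw [hgen i]
      exact h
    · intro q hq
      exact LinearMap.ofIsCompl_apply_right hQ
        (φ := M.mulVecLin ∘ₗ (Submodule.span ℝ (Set.range v)).subtype) (ψ := Q.subtype) ⟨q, hq⟩
  have hpow : ∀ k i, (f ^ k) (v i) = v (i + k) := by
    intro k
    induction k with
    | zero => intro i; simp
    | succ k ih => intro i; rw [pow_succ', Module.End.mul_apply, ih, hfv]; rfl
  have hpowQ : ∀ k, ∀ q ∈ Q, (f ^ k) q = q := by
    intro k q hq
    induction k with
    | zero => simp
    | succ k ih => rw [pow_succ', Module.End.mul_apply, ih, hfQ q hq]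
  have hfp : f ^ p = 1 := by
    have h1 : Submodule.span ℝ (Set.range v) ≤ LinearMap.eqLocus (f ^ p) 1 := by
      rw [Submodule.span_le]
      rintro _ ⟨i, rfl⟩
      show (f ^ p) (v i) = v i
      rw [hpow, hper]
    have h2 : Q ≤ LinearMap.eqLocus (f ^ p) 1 := fun q hq => hpowQ p q hq
    have h3 := sup_le h1 h2
    rw [hQ.sup_eq_top] at h3
    exact LinearMap.ext fun x => h3 (Submodule.mem_top (x := x))
  refine ⟨LinearMap.toMatrixAlgEquiv' f, ?_, ?_⟩
  · rw [← map_pow, hfp, map_one]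
  · intro i
    rw [← hfv i]
    exact (LinearMap.toMatrix'_mulVec f (v i)).symm
end
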